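/- arXiv:2204.00077 — 6 statements merged into one kernel-verified Lean document; each statement's English description precedes it below -/
import Mathlib

section
/- Let M be a d×d real symmetric positive semidefinite matrix and let c ≥ 0. Over all matrices U ∈ ℝ^{d×d} satisfying U·Uᵀ = M, the quantity Σ_{i=1}^{d} log(1 + c·‖U_i‖₂²) attains its minimum, and the minimum value equals log det(I + c·M). Equivalently, −log det(I + c·M) = max over {U : U·Uᵀ = M} of −Σ_i log(1 + c·‖U_i‖₂²). -/
/-!
By Sylvester's identity, `det (1 + c V Vᵀ) = det (1 + c Vᵀ V)`, and the diagonal entries of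
`1 + c Vᵀ V` are exactly `1 + c ‖V_i‖₂²`. Hence the lower bound is Hadamard's inequality
`det A ≤ ∏ A i i` for the positive definite matrix `A = 1 + c Vᵀ V`
(`det_le_prod_diag_of_posDef`). Hadamard's inequality follows by scaling `A` to unit diagonal and
bounding the product of the eigenvalues by `μ ≤ exp (μ - 1)`
(`det_le_exp_trace_sub_card`). Equality holds when `Vᵀ V` is diagonal, which the
spectral theorem achieves with `V = Q * diagonal (√λ)` (`exists_factor_diagonal_gram`).
-/

open Matrix BigOperators

theorem det_le_exp_trace_sub_card {n : Type*} [Fintype n] [DecidableEq n]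
    {B : Matrix n n ℝ} (hB : B.PosSemidef) :
    B.det ≤ Real.exp (B.trace - Fintype.card n) := by
  have hdet : B.det = ∏ i, hB.1.eigenvalues i := by
    simpa using hB.1.det_eq_prod_eigenvalues
  have htr : B.trace = ∑ i, hB.1.eigenvalues i := by
    simpa using hB.1.trace_eq_sum_eigenvalues
  calc B.det = ∏ i, hB.1.eigenvalues i := hdet
    _ ≤ ∏ i, Real.exp (hB.1.eigenvalues i - 1) :=
        Finset.prod_le_prod (fun i _ => hB.eigenvalues_nonneg i) fun i _ => by
          linarith [Real.add_one_le_exp (hB.1.eigenvalues i - 1)]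
    _ = Real.exp (B.trace - Fintype.card n) := by
        rw [← Real.exp_sum, htr, Finset.sum_sub_distrib]
        simp

/-- **Hadamard's inequality** for positive definite real matrices. -/
theorem det_le_prod_diag_of_posDef {n : Type*} [Fintype n] [DecidableEq n]
    {A : Matrix n n ℝ} (hA : A.PosDef) : A.det ≤ ∏ i, A i i := by
  have hpos : ∀ i, 0 < A i i := fun i => hA.diag_pos
  have hprod : 0 < ∏ i, A i i := Finset.prod_pos fun i _ => hpos i
  -- `D * A * D` is `A` rescaled to have unit diagonal.
  set D : Matrix n n ℝ := diagonal fun i => (√(A i i))⁻¹ with hD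
  have hB : (D * A * D).PosSemidef := by
    have h := hA.posSemidef.mul_mul_conjTranspose_same D
    rwa [hD, diagonal_conjTranspose, star_trivial] at h
  have htr : (D * A * D).trace = Fintype.card n := by
    have h : ∀ i, (D * A * D) i i = 1 := fun i => by
      rw [hD, mul_diagonal, diagonal_mul]
      have := Real.mul_self_sqrt (hpos i).le
      have h0 : √(A i i) ≠ 0 := (Real.sqrt_pos.2 (hpos i)).ne'
      field_simp
      nlinarith
    simp [trace, h]
  have hdet : (D * A * D).det = A.det / ∏ i, A i i := by
    have h2 : D.det * D.det = (∏ i, A i i)⁻¹ := by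
      rw [hD, det_diagonal, ← Finset.prod_mul_distrib, ← Finset.prod_inv_distrib]
      refine Finset.prod_congr rfl fun i _ => ?_
      rw [← mul_inv, Real.mul_self_sqrt (hpos i).le]
    rw [det_mul, det_mul, div_eq_mul_inv, ← h2]
    ring
  have key := det_le_exp_trace_sub_card hB
  rw [htr, hdet, sub_self, Real.exp_zero, div_le_one hprod] at key
  exact key

/-- A positive semidefinite matrix has a square factor with pairwise orthogonal columns. -/
theorem exists_factor_diagonal_gram {n : Type*} [Fintype n] [DecidableEq n]
    {M : Matrix n n ℝ} (hM : M.PosSemidef) :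
    ∃ (U : Matrix n n ℝ) (l : n → ℝ), U * Uᵀ = M ∧ Uᵀ * U = diagonal l := by
  set Q : Matrix n n ℝ := (hM.1.eigenvectorUnitary : Matrix n n ℝ) with hQ
  set l := hM.1.eigenvalues with hl
  have hQQ : Qᵀ * Q = 1 := by
    have h := Unitary.coe_star_mul_self hM.1.eigenvectorUnitary
    rwa [star_eq_conjTranspose, conjTranspose_eq_transpose_of_trivial] at h
  have hspec : M = Q * diagonal l * Qᵀ := by
    have h := hM.1.spectral_theorem
    rw [Unitary.conjStarAlgAut_apply, star_eq_conjTranspose,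
      conjTranspose_eq_transpose_of_trivial] at h
    exact h
  have hS : (diagonal fun i => √(l i)) * (diagonal fun i => √(l i)) = diagonal l := by
    rw [diagonal_mul_diagonal]
    congr 1
    exact funext fun i => Real.mul_self_sqrt (hM.eigenvalues_nonneg i)
  refine ⟨Q * diagonal fun i => √(l i), l, ?_, ?_⟩
  · rw [transpose_mul, diagonal_transpose, hspec, ← hS]
    simp only [Matrix.mul_assoc]
  · rw [transpose_mul, diagonal_transpose, Matrix.mul_assoc, ← Matrix.mul_assoc Qᵀ, hQQ,
      Matrix.one_mul, hS]

theorem det_one_add_smul_mul_transpose {n : Type*} [Fintype n] [DecidableEq n]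
    (V : Matrix n n ℝ) (c : ℝ) :
    (1 + c • (V * Vᵀ)).det = (1 + c • (Vᵀ * V)).det := by
  rw [← Matrix.smul_mul, det_one_add_mul_comm, Matrix.mul_smul]

theorem one_add_smul_gram_diag {n : Type*} [Fintype n] [DecidableEq n]
    (V : Matrix n n ℝ) (c : ℝ) (i : n) :
    (1 + c • (Vᵀ * V)) i i = 1 + c * ∑ j, (V j i) ^ 2 := by
  simp [Matrix.mul_apply, sq]

/-- Over all `U` with `U * Uᵀ = M` (for `M` PSD and `c ≥ 0`), the quantity
`∑ i, log (1 + c * ‖U_i‖₂²)` attains its minimum, and the minimum value equals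
`log det (I + c • M)`.  Here `‖U_i‖₂² = ∑ j, (U j i)^2` is the squared Euclidean norm
of the `i`-th column of `U`. -/
theorem variational_logdet_min (d : ℕ) (M : Matrix (Fin d) (Fin d) ℝ)
    (hM : M.PosSemidef) (c : ℝ) (hc : 0 ≤ c) :
    ∃ U : Matrix (Fin d) (Fin d) ℝ, U * Uᵀ = M ∧
      (∑ i, Real.log (1 + c * ∑ j, (U j i) ^ 2)) = Real.log ((1 + c • M).det) ∧
      ∀ V : Matrix (Fin d) (Fin d) ℝ, V * Vᵀ = M →
        Real.log ((1 + c • M).det) ≤ ∑ i, Real.log (1 + c * ∑ j, (V j i) ^ 2) := by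
  have hne : ∀ (V : Matrix (Fin d) (Fin d) ℝ) (i : Fin d), 1 + c * ∑ j, (V j i) ^ 2 ≠ 0 :=
    fun V i => by positivity
  obtain ⟨U, l, hU, hUl⟩ := exists_factor_diagonal_gram hM
  refine ⟨U, hU, ?_, fun V hV => ?_⟩
  · rw [← Real.log_prod fun i _ => hne U i, ← hU, det_one_add_smul_mul_transpose]
    simp_rw [← one_add_smul_gram_diag]
    rw [hUl, ← diagonal_one, ← diagonal_smul, diagonal_add, det_diagonal]
    simp
  · have hpd : (1 + c • (Vᵀ * V)).PosDef := by
      have h : (Vᵀ * V).PosSemidef := by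
        have h := posSemidef_conjTranspose_mul_self V
        rwa [conjTranspose_eq_transpose_of_trivial] at h
      exact PosDef.one.add_posSemidef (h.smul hc)
    rw [← Real.log_prod fun i _ => hne V i, ← hV, det_one_add_smul_mul_transpose]
    simp_rw [← one_add_smul_gram_diag]
    exact Real.log_le_log hpd.det_pos (det_le_prod_diag_of_posDef hpd)
end

section
/- Let M be a d×d real symmetric positive semidefinite matrix, let c ≥ 0, and let U ∈ ℝ^{d×n} be any matrix (for any number of columns n) satisfying U·Uᵀ = M. Then log det(I + c·M) ≤ Σ_{i=1}^{n} log(1 + c·‖U_i‖₂²). -/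
/-!
Writing `U * Uᵀ` as the sum of the rank-one matrices `u uᵀ` over the columns `u` of `U`, the
columns are added one at a time. If `A = 1 + P` with `P` positive semidefinite, the matrix
determinant lemma gives `det (A + c u uᵀ) = det A * (1 + c uᵀ A⁻¹ u)`, and `A ≥ 1` gives
`uᵀ A⁻¹ u ≤ uᵀ u`, so each column multiplies the determinant by at most `1 + c ‖u‖²`
(`det_rankOne_update_le`). Induction on the set of columns gives
`det (1 + c U Uᵀ) ≤ ∏ (1 + c ‖U_i‖²)`, and taking logarithms concludes.
-/

open Matrix BigOperators

/-- The inequality `uᵀ (1 + P)⁻¹ u ≤ uᵀ u`. -/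
lemma dotProduct_inv_one_add_mulVec_le {d : ℕ} {P : Matrix (Fin d) (Fin d) ℝ}
    (hP : P.PosSemidef) (u : Fin d → ℝ) :
    u ⬝ᵥ ((1 + P)⁻¹ *ᵥ u) ≤ u ⬝ᵥ u := by
  have hdet : IsUnit (1 + P).det := (PosDef.one.add_posSemidef hP).det_pos.ne'.isUnit
  set w := (1 + P)⁻¹ *ᵥ u with hw
  have hu : u = w + P *ᵥ w := by
    have h : (1 + P) *ᵥ w = u := by
      rw [hw, mulVec_mulVec, mul_nonsing_inv _ hdet, one_mulVec]
    rw [← h, add_mulVec, one_mulVec]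
  have h1 : 0 ≤ w ⬝ᵥ (P *ᵥ w) := by simpa using hP.dotProduct_mulVec_nonneg w
  have h2 : 0 ≤ (P *ᵥ w) ⬝ᵥ (P *ᵥ w) := by
    simpa using dotProduct_star_self_nonneg (P *ᵥ w)
  -- With `u = w + P w`, the difference of the two sides is `wᵀ P w + ‖P w‖²`.
  clear_value w
  subst hu
  have h3 := dotProduct_comm w (P *ᵥ w)
  simp only [dotProduct_add, add_dotProduct]
  linarith

lemma det_rankOne_update_le {d : ℕ} {P : Matrix (Fin d) (Fin d) ℝ}
    (hP : P.PosSemidef) {c : ℝ} (hc : 0 ≤ c) (u : Fin d → ℝ) :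
    (1 + P + c • vecMulVec u u).det ≤ (1 + P).det * (1 + c * (u ⬝ᵥ u)) := by
  have hpos : 0 < (1 + P).det := (PosDef.one.add_posSemidef hP).det_pos
  have h : (1 + P + c • vecMulVec u u).det
      = (1 + P).det * (1 + c * (u ⬝ᵥ ((1 + P)⁻¹ *ᵥ u))) := by
    rw [← smul_vecMulVec, vecMulVec_eq Unit,
      det_add_replicateCol_mul_replicateRow hpos.ne'.isUnit, det_unique (n := Unit), Matrix.mul_assoc,
      ← replicateCol_mulVec]
    simp [mulVec_smul]
  rw [h]
  have := dotProduct_inv_one_add_mulVec_le hP u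
  gcongr

lemma det_one_add_sum_le_prod {d n : ℕ} {c : ℝ} (hc : 0 ≤ c)
    (u : Fin n → Fin d → ℝ) (s : Finset (Fin n)) :
    (1 + c • ∑ i ∈ s, vecMulVec (u i) (u i)).det ≤ ∏ i ∈ s, (1 + c * (u i ⬝ᵥ u i)) := by
  induction s using Finset.induction_on with
  | empty => simp
  | insert a s ha ih =>
    have hP : (c • ∑ i ∈ s, vecMulVec (u i) (u i)).PosSemidef :=
      (posSemidef_sum s fun i _ => by
        simpa using posSemidef_vecMulVec_self_star (u i)).smul hc
    have h0 : 0 ≤ u a ⬝ᵥ u a := by simpa using dotProduct_star_self_nonneg (u a)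
    rw [Finset.sum_insert ha, Finset.prod_insert ha, smul_add, add_comm (c • vecMulVec _ _),
      ← add_assoc, mul_comm]
    exact (det_rankOne_update_le hP hc (u a)).trans
      (mul_le_mul_of_nonneg_right ih (by positivity))

/-- For `M` PSD, `c ≥ 0`, and any `U ∈ ℝ^{d×n}` with `U * Uᵀ = M`,
`log det (I + c • M) ≤ ∑ i, log (1 + c * ‖U_i‖₂²)`, where
`‖U_i‖₂² = ∑ j, (U j i)^2` is the squared Euclidean norm of the `i`-th column of `U`. -/
theorem logdet_le_variational (d n : ℕ) (M : Matrix (Fin d) (Fin d) ℝ)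
    (hM : M.PosSemidef) (c : ℝ) (hc : 0 ≤ c)
    (U : Matrix (Fin d) (Fin n) ℝ) (hU : U * Uᵀ = M) :
    Real.log ((1 + c • M).det) ≤ ∑ i, Real.log (1 + c * ∑ j, (U j i) ^ 2) := by
  have hsum : M = ∑ i, vecMulVec (Uᵀ i) (Uᵀ i) := by
    rw [← hU]
    ext a b
    simp [mul_apply, Matrix.sum_apply, vecMulVec_apply]
  have hpos : 0 < (1 + c • M).det := (PosDef.one.add_posSemidef (hM.smul hc)).det_pos
  have hle := det_one_add_sum_le_prod hc (fun i => Uᵀ i) Finset.univ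
  rw [← hsum] at hle
  rw [← Real.log_prod fun i _ => by positivity]
  refine Real.log_le_log hpos (hle.trans_eq ?_)
  simp [dotProduct, sq]
end

section
/- Let Z ∈ ℝ^{d×m}, and let Π ∈ ℝ^{m×k} have nonnegative entries, rows each summing to one, and every column sum ⟨1, Π_j⟩ > 0. Set α = d/(m·ε²), α_j = d/(⟨1, Π_j⟩·ε²) and γ_j = ⟨1, Π_j⟩/m for a fixed ε > 0. Let Γ ∈ ℝ^{d×q} have unit ℓ₂-norm columns and let A ∈ ℝ^{q×k} have nonnegative entries, such that Γ·Diag(A_j)·Γᵀ = Z·Diag(Π_j)·Zᵀ for every j = 1, …, k. Then (1/2)·log det(I + α·Σ_{j=1}^{k} Γ·Diag(A_j)·Γᵀ) − Σ_{j=1}^{k} (γ_j/2)·Σ_{l=1}^{q} log(1 + α_j·A_{l,j}) ≤ (1/2)·log det(I + α·Z·Zᵀ) − Σ_{j=1}^{k} (γ_j/2)·log det(I + α_j·Z·Diag(Π_j)·Zᵀ). -/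
open Matrix BigOperators

/-!
The rows of `P` sum to one, so adding the constraints over `j` gives
`∑ j, Γ Diag(A_j) Γᵀ = Z Zᵀ` and the two leading terms agree. What remains is, for each `j`,
the Hadamard-type bound `det (I + Γ Diag(a) Γᵀ) ≤ ∏ l, (1 + a l)` for `a ≥ 0` and unit columns
(`det_one_add_mul_diagonal_le`).

That bound is obtained by adding the rank-one terms `a l • v vᵀ`, `v` a column of `Γ`, one at a
time. By the matrix determinant lemma each step multiplies the determinant by
`1 + a l * (vᵀ M⁻¹ v)`, where `M` dominates the identity, so that `0 ≤ vᵀ M⁻¹ v ≤ vᵀ v = 1`.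
-/

/-- If `M` dominates the identity as a quadratic form, then `0 ≤ vᵀ M⁻¹ v ≤ vᵀ v`.
No symmetry of `M` is needed. -/
lemma dotProduct_inv_mulVec_bounds {n : Type*} [Fintype n] [DecidableEq n]
    {M : Matrix n n ℝ} (hdet : IsUnit M.det) (hM : ∀ w, w ⬝ᵥ w ≤ w ⬝ᵥ (M *ᵥ w)) (v : n → ℝ) :
    0 ≤ v ⬝ᵥ (M⁻¹ *ᵥ v) ∧ v ⬝ᵥ (M⁻¹ *ᵥ v) ≤ v ⬝ᵥ v := by
  -- With `w = M⁻¹ v`: `wᵀ w ≤ wᵀ M w = wᵀ v`, and `2 wᵀ v ≤ wᵀ w + vᵀ v`.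
  set w := M⁻¹ *ᵥ v with hw
  have hMw : M *ᵥ w = v := by
    rw [hw, mulVec_mulVec, mul_nonsing_inv _ hdet, one_mulVec]
  have h1 := hM w
  rw [hMw, dotProduct_comm w v] at h1
  have h2 : 0 ≤ w ⬝ᵥ w := Finset.sum_nonneg fun i _ => mul_self_nonneg _
  have h3 : 0 ≤ (v - w) ⬝ᵥ (v - w) := Finset.sum_nonneg fun i _ => mul_self_nonneg _
  rw [sub_dotProduct, dotProduct_sub, dotProduct_sub, dotProduct_comm w v] at h3
  constructor <;> linarith

/-- The Hadamard-type bound for a partial sum of rank-one terms, together with the positivity of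
the determinant and the domination of the identity that carry the induction. -/
lemma rankOne_sum_bounds {n ι : Type*} [Fintype n] [DecidableEq n] [DecidableEq ι]
    (v : ι → n → ℝ) (hv : ∀ l, v l ⬝ᵥ v l = 1) (a : ι → ℝ) (ha : ∀ l, 0 ≤ a l) (s : Finset ι) :
    0 < (1 + ∑ l ∈ s, a l • vecMulVec (v l) (v l)).det ∧
    (∀ w, w ⬝ᵥ w ≤ w ⬝ᵥ ((1 + ∑ l ∈ s, a l • vecMulVec (v l) (v l)) *ᵥ w)) ∧
    (1 + ∑ l ∈ s, a l • vecMulVec (v l) (v l)).det ≤ ∏ l ∈ s, (1 + a l) := by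
  induction s using Finset.induction_on with
  | empty => simp
  | insert l s hl ih =>
    rw [Finset.sum_insert hl, Finset.prod_insert hl, add_comm (a l • _), ← add_assoc]
    set M := 1 + ∑ l ∈ s, a l • vecMulVec (v l) (v l)
    obtain ⟨hpos, hdom, hle⟩ := ih
    have hunit : IsUnit M.det := hpos.ne'.isUnit
    obtain ⟨h0, h1⟩ := dotProduct_inv_mulVec_bounds hunit hdom (v l)
    rw [hv] at h1
    have hstep : (M + a l • vecMulVec (v l) (v l)).det
        = M.det * (1 + a l * (v l ⬝ᵥ (M⁻¹ *ᵥ v l))) := by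
      rw [← smul_vecMulVec, vecMulVec_eq Unit, det_add_replicateCol_mul_replicateRow hunit]
      congr 1
      rw [det_unique, Matrix.mul_assoc, ← replicateCol_mulVec, Matrix.add_apply, one_apply_eq,
        replicateRow_mul_replicateCol_apply, mulVec_smul, dotProduct_smul, smul_eq_mul]
    have hal := ha l
    refine ⟨?_, fun w => ?_, ?_⟩
    · rw [hstep]
      positivity
    · rw [add_mulVec, dotProduct_add, smul_mulVec, dotProduct_smul, vecMulVec_mulVec]
      have h2 : 0 ≤ a l * (v l ⬝ᵥ w) ^ 2 := by positivity
      have h3 := hdom w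
      simp only [dotProduct_comm w (v l), op_smul_eq_smul, dotProduct_smul, smul_eq_mul]
      nlinarith
    · rw [hstep, mul_comm]
      gcongr
      nlinarith

/-- A Hadamard-type determinant bound for a matrix `G` with unit columns. -/
lemma det_one_add_mul_diagonal_le {n ι : Type*} [Fintype n] [DecidableEq n] [Fintype ι]
    [DecidableEq ι] (G : Matrix n ι ℝ) (hG : ∀ l, ∑ i, (G i l) ^ 2 = 1)
    (a : ι → ℝ) (ha : ∀ l, 0 ≤ a l) :
    0 < (1 + G * diagonal a * Gᵀ).det ∧ (1 + G * diagonal a * Gᵀ).det ≤ ∏ l, (1 + a l) := by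
  have hsum : G * diagonal a * Gᵀ = ∑ l, a l • vecMulVec (Gᵀ l) (Gᵀ l) := by
    ext i j
    rw [mul_apply, Matrix.sum_apply]
    refine Finset.sum_congr rfl fun l _ => ?_
    simp [mul_diagonal, vecMulVec_apply]
    ring
  obtain ⟨h0, -, h1⟩ := rankOne_sum_bounds (fun l => Gᵀ l)
    (fun l => by rw [← hG l]; simp [dotProduct, sq]) a ha Finset.univ
  rw [hsum]
  exact ⟨h0, h1⟩

/-- The variational objective lower-bounds the MCR² objective under the exact
dictionary constraints.  With `α = d/(m ε²)`, `α_j = d/(⟨1,Π_j⟩ ε²)`, `γ_j = ⟨1,Π_j⟩/m`,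
if `Γ` has unit-norm columns, `A ≥ 0`, and `Γ Diag(A_j) Γᵀ = Z Diag(Π_j) Zᵀ` for all `j`, then
`½ log det(I + α ∑_j Γ Diag(A_j) Γᵀ) − ∑_j (γ_j/2) ∑_l log(1 + α_j A_{l,j})`
`≤ ½ log det(I + α Z Zᵀ) − ∑_j (γ_j/2) log det(I + α_j Z Diag(Π_j) Zᵀ)`. -/
theorem variational_le_mcr2 (d m k q : ℕ) (Z : Matrix (Fin d) (Fin m) ℝ)
    (P : Matrix (Fin m) (Fin k) ℝ) (hP : ∀ i j, 0 ≤ P i j)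
    (hrow : ∀ i, ∑ j, P i j = 1) (hcol : ∀ j, 0 < ∑ i, P i j)
    (ε : ℝ) (hε : 0 < ε)
    (Γ : Matrix (Fin d) (Fin q) ℝ) (hΓ : ∀ l, ∑ i, (Γ i l) ^ 2 = 1)
    (A : Matrix (Fin q) (Fin k) ℝ) (hA : ∀ l j, 0 ≤ A l j)
    (hconstr : ∀ j, Γ * Matrix.diagonal (fun l => A l j) * Γᵀ =
        Z * Matrix.diagonal (fun i => P i j) * Zᵀ) :
    (1 / 2) * Real.log
        ((1 + ((d : ℝ) / (m * ε ^ 2)) •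
          ∑ j : Fin k, Γ * Matrix.diagonal (fun l => A l j) * Γᵀ).det)
      - ∑ j : Fin k, ((∑ i, P i j) / m) / 2 *
          ∑ l : Fin q, Real.log (1 + ((d : ℝ) / ((∑ i, P i j) * ε ^ 2)) * A l j)
    ≤ (1 / 2) * Real.log ((1 + ((d : ℝ) / (m * ε ^ 2)) • (Z * Zᵀ)).det)
      - ∑ j : Fin k, ((∑ i, P i j) / m) / 2 *
          Real.log ((1 + ((d : ℝ) / ((∑ i, P i j) * ε ^ 2)) •
            (Z * Matrix.diagonal (fun i => P i j) * Zᵀ)).det) := by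
  have hZ : ∑ j : Fin k, Γ * Matrix.diagonal (fun l => A l j) * Γᵀ = Z * Zᵀ := by
    simp_rw [hconstr]
    rw [← Matrix.sum_mul, ← Matrix.mul_sum]
    have hone : ∑ j : Fin k, Matrix.diagonal (fun i => P i j) = (1 : Matrix (Fin m) (Fin m) ℝ) := by
      ext a b
      rw [Matrix.sum_apply]
      by_cases h : a = b
      · subst h
        simp [hrow]
      · simp [h]
    rw [hone, Matrix.mul_one]
  rw [hZ]
  refine sub_le_sub_left (Finset.sum_le_sum fun j _ => ?_) _
  have hpj := hcol j
  refine mul_le_mul_of_nonneg_left ?_ (by positivity)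
  set c := (d : ℝ) / ((∑ i, P i j) * ε ^ 2)
  have hc : 0 ≤ c := by positivity
  have hca : ∀ l, 0 ≤ c * A l j := fun l => mul_nonneg hc (hA l j)
  have hscale : c • (Z * Matrix.diagonal (fun i => P i j) * Zᵀ)
      = Γ * Matrix.diagonal (fun l => c * A l j) * Γᵀ := by
    have hd : Matrix.diagonal (fun l => c * A l j) = c • Matrix.diagonal (fun l => A l j) := by
      rw [← diagonal_smul]
      rfl
    rw [← hconstr j, hd, Matrix.mul_smul, Matrix.smul_mul]
  obtain ⟨h0, h1⟩ := det_one_add_mul_diagonal_le Γ hΓ (fun l => c * A l j) hca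
  rw [hscale, ← Real.log_prod fun l _ => (by linarith [hca l] : (0 : ℝ) < 1 + c * A l j).ne']
  exact Real.log_le_log h0 h1
end

section
/- Let Z ∈ ℝ^{d×m}, let Π ∈ ℝ^{m×k} have nonnegative entries, and let c_1, …, c_k ≥ 0 be scalars. Set q = k·d. Then there exist a matrix Γ ∈ ℝ^{d×q} whose columns all have unit ℓ₂ norm and a matrix A ∈ ℝ^{q×k} with nonnegative entries such that, for every j = 1, …, k: (i) Γ·Diag(A_j)·Γᵀ = Z·Diag(Π_j)·Zᵀ, and (ii) Σ_{l=1}^{q} log(1 + c_j·A_{l,j}) = log det(I + c_j·Z·Diag(Π_j)·Zᵀ). -/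
/-!
Each matrix `S_j = Z Diag(Π_j) Zᵀ` is positive semidefinite, so `S_j = U_j Diag(λ_j) U_jᵀ` with `U_j`
orthogonal and `λ_j ≥ 0` (`exists_orthogonal_diagonalization`). The dictionary `Γ` is the
concatenation `[U_1, …, U_k]`, and column `j` of `A` carries `λ_j` on the `j`-th block and zeros
elsewhere. The other blocks then contribute nothing to `Γ Diag(A_j) Γᵀ`, and contribute `log 1 = 0`
to the sum of logarithms, while `det (I + c S_j) = ∏ (1 + c λ_j)` by orthogonality of `U_j`.
-/

open Matrix BigOperators

theorem exists_orthogonal_diagonalization {d : ℕ} (S : Matrix (Fin d) (Fin d) ℝ)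
    (hS : S.PosSemidef) :
    ∃ (U : Matrix (Fin d) (Fin d) ℝ) (v : Fin d → ℝ),
      (∀ i, 0 ≤ v i) ∧ Uᵀ * U = 1 ∧ U * Uᵀ = 1 ∧ S = U * Matrix.diagonal v * Uᵀ := by
  have h1 := Unitary.coe_star_mul_self hS.isHermitian.eigenvectorUnitary
  have h3 := hS.isHermitian.spectral_theorem
  rw [Unitary.conjStarAlgAut_apply] at h3
  rw [Matrix.star_eq_conjTranspose, Matrix.conjTranspose_eq_transpose_of_trivial] at h1 h3
  exact ⟨_, hS.isHermitian.eigenvalues, hS.eigenvalues_nonneg, h1,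
    mul_eq_one_comm.mp h1, h3⟩

theorem det_one_add_smul_orthogonal_conj {d : ℕ} (U : Matrix (Fin d) (Fin d) ℝ) (v : Fin d → ℝ)
    (hU : U * Uᵀ = 1) (c : ℝ) :
    (1 + c • (U * Matrix.diagonal v * Uᵀ)).det = ∏ i, (1 + c * v i) := by
  have h : 1 + c • (U * Matrix.diagonal v * Uᵀ)
      = U * Matrix.diagonal (fun i => 1 + c * v i) * Uᵀ := by
    have hd : Matrix.diagonal (fun i => 1 + c * v i) = 1 + c • Matrix.diagonal v := by
      ext i j
      by_cases hij : i = j <;> simp [hij]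
    rw [hd, Matrix.mul_add, Matrix.add_mul, Matrix.mul_one, hU]
    simp
  have hdet : U.det * Uᵀ.det = 1 := by rw [← Matrix.det_mul, hU, Matrix.det_one]
  rw [h, Matrix.det_mul, Matrix.det_mul, Matrix.det_diagonal, mul_right_comm, hdet, one_mul]

/-- With `q = k·d`, there exist a dictionary `Γ ∈ ℝ^{d×q}` with unit `ℓ₂`-norm columns and a
nonnegative matrix `A ∈ ℝ^{q×k}` such that for every class `j`:
(i) `Γ Diag(A_j) Γᵀ = Z Diag(Π_j) Zᵀ`, and
(ii) `∑_l log(1 + c_j A_{l,j}) = log det(I + c_j Z Diag(Π_j) Zᵀ)`. -/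
theorem exists_exact_dictionary (d m k : ℕ) (Z : Matrix (Fin d) (Fin m) ℝ)
    (P : Matrix (Fin m) (Fin k) ℝ) (hP : ∀ i j, 0 ≤ P i j)
    (c : Fin k → ℝ) (hc : ∀ j, 0 ≤ c j) :
    ∃ (Γ : Matrix (Fin d) (Fin (k * d)) ℝ) (A : Matrix (Fin (k * d)) (Fin k) ℝ),
      (∀ l, ∑ i, (Γ i l) ^ 2 = 1) ∧ (∀ l j, 0 ≤ A l j) ∧
      ∀ j, Γ * Matrix.diagonal (fun l => A l j) * Γᵀ =
            Z * Matrix.diagonal (fun i => P i j) * Zᵀ ∧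
        ∑ l : Fin (k * d), Real.log (1 + c j * A l j) =
          Real.log ((1 + c j • (Z * Matrix.diagonal (fun i => P i j) * Zᵀ)).det) := by
  have hS : ∀ j, (Z * Matrix.diagonal (fun i => P i j) * Zᵀ).PosSemidef := by
    intro j
    have h := (Matrix.PosSemidef.diagonal (d := fun i => P i j)
      (fun i => hP i j)).mul_mul_conjTranspose_same Z
    rwa [Matrix.conjTranspose_eq_transpose_of_trivial] at h
  choose U v hv hU1 hU2 hUS using fun j => exists_orthogonal_diagonalization _ (hS j)
  -- Columns of the dictionary are indexed by pairs (block, position in the block).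
  let e : Fin (k * d) ≃ Fin k × Fin d := finProdFinEquiv.symm
  refine ⟨Matrix.of fun i l => U (e l).1 i (e l).2,
    Matrix.of fun l j => if (e l).1 = j then v j (e l).2 else 0,
    ?_, ?_, fun j => ⟨?_, ?_⟩⟩
  · intro l
    have h := congrFun (congrFun (hU1 (e l).1) (e l).2) (e l).2
    simpa [Matrix.mul_apply, sq] using h
  · intro l j
    rw [Matrix.of_apply]
    split_ifs
    · exact hv _ _
    · exact le_rfl
  · rw [hUS j]
    ext a b
    rw [Matrix.mul_apply, Matrix.mul_apply]
    simp only [Matrix.mul_diagonal, Matrix.transpose_apply, Matrix.of_apply]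
    rw [e.sum_comp (fun p : Fin k × Fin d =>
      U p.1 a p.2 * (if p.1 = j then v j p.2 else 0) * U p.1 b p.2), Fintype.sum_prod_type,
      Finset.sum_eq_single j]
    · simp
    · intro x _ hx
      simp [hx]
    · simp
  · rw [hUS j, det_one_add_smul_orthogonal_conj _ _ (hU2 j), Real.log_prod]
    · simp only [Matrix.of_apply]
      rw [e.sum_comp (fun p : Fin k × Fin d =>
        Real.log (1 + c j * (if p.1 = j then v j p.2 else 0))), Fintype.sum_prod_type,
        Finset.sum_eq_single j]
      · simp
      · intro x _ hx
        simp [hx]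
      · simp
    · intro i _
      have := mul_nonneg (hc j) (hv j i)
      positivity
end

section
/- Let Z ∈ ℝ^{d×m}, Π ∈ ℝ^{m×k}, Γ ∈ ℝ^{d×q}, and A ∈ ℝ^{q×k}. Then Σ_{j=1}^{k} ‖Z·Diag(Π_j)·Zᵀ − Γ·Diag(A_j)·Γᵀ‖_F² = ⟨Π·Πᵀ, (Zᵀ·Z)^{⊙2}⟩ − 2·⟨A·Πᵀ, (Γᵀ·Z)^{⊙2}⟩ + ⟨A·Aᵀ, (Γᵀ·Γ)^{⊙2}⟩. -/
open Matrix BigOperators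

/-!
Expanding the square `(M - N)² = M² - 2 N M + N²` entrywise reduces the identity to three instances
of one bilinear formula, `sum_sandwich_mul_sandwich`: since `X Diag(B_j) Xᵀ = ∑ i, B i j • x_i x_iᵀ`
with `x_i` the columns of `X`, and `⟨x xᵀ, y yᵀ⟩ = ⟨x, y⟩²`, the Frobenius inner products of such
matrices are weighted sums of squared entries of `Xᵀ Y`.
-/

lemma sandwich_apply {d p : ℕ} (X : Matrix (Fin d) (Fin p) ℝ) (v : Fin p → ℝ) (a b : Fin d) :
    (X * Matrix.diagonal v * Xᵀ) a b = ∑ i, X a i * v i * X b i := by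
  rw [Matrix.mul_apply]
  simp only [Matrix.mul_diagonal, Matrix.transpose_apply]

/-- The polarized form of the expansion: the Frobenius inner products of `X Diag(B_j) Xᵀ` and
`Y Diag(C_j) Yᵀ`, summed over `j`, equal `⟨B Cᵀ, (Xᵀ Y)^{⊙2}⟩`. -/
lemma sum_sandwich_mul_sandwich {d p r k : ℕ} (X : Matrix (Fin d) (Fin p) ℝ)
    (B : Matrix (Fin p) (Fin k) ℝ) (Y : Matrix (Fin d) (Fin r) ℝ)
    (C : Matrix (Fin r) (Fin k) ℝ) :
    ∑ j : Fin k, ∑ a : Fin d, ∑ b : Fin d,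
        (X * Matrix.diagonal (fun i => B i j) * Xᵀ) a b
          * (Y * Matrix.diagonal (fun l => C l j) * Yᵀ) a b
    = Matrix.trace ((B * Cᵀ)ᵀ * Matrix.of fun a b => ((Xᵀ * Y) a b) ^ 2) := by
  have hL : ∀ j : Fin k, ∑ a : Fin d, ∑ b : Fin d,
        (X * Matrix.diagonal (fun i => B i j) * Xᵀ) a b
          * (Y * Matrix.diagonal (fun l => C l j) * Yᵀ) a b
      = ∑ l, ∑ i, B i j * C l j * ((Xᵀ * Y) i l) ^ 2 := by
    intro j
    simp only [sandwich_apply, Finset.sum_mul_sum]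
    simp only [Matrix.mul_apply, Matrix.transpose_apply, sq, Finset.sum_mul_sum]
    simp only [Finset.mul_sum]
    -- Move the row indices `a`, `b` inside the column indices `i`, `l`.
    calc _ = ∑ a : Fin d, ∑ i, ∑ l, ∑ b, X a i * B i j * X b i * (Y a l * C l j * Y b l) := by
          refine Finset.sum_congr rfl fun a _ => ?_
          rw [Finset.sum_comm]
          exact Finset.sum_congr rfl fun i _ => Finset.sum_comm
      _ = ∑ i, ∑ l, ∑ a, ∑ b, X a i * B i j * X b i * (Y a l * C l j * Y b l) := by
          rw [Finset.sum_comm]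
          exact Finset.sum_congr rfl fun i _ => Finset.sum_comm
      _ = _ := by
          rw [Finset.sum_comm]
          refine Finset.sum_congr rfl fun l _ => Finset.sum_congr rfl fun i _ =>
            Finset.sum_congr rfl fun a _ => Finset.sum_congr rfl fun b _ => ?_
          ring
  rw [Finset.sum_congr rfl fun j _ => hL j, Finset.sum_comm]
  simp only [Matrix.trace, Matrix.diag_apply]
  refine Finset.sum_congr rfl fun l _ => ?_
  rw [Finset.sum_comm, Matrix.mul_apply]
  refine Finset.sum_congr rfl fun i _ => ?_
  rw [← Finset.sum_mul, Matrix.transpose_apply, Matrix.mul_apply]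
  rfl

/-- Expansion of the matrix-approximation penalty:
`∑_j ‖Z Diag(Π_j) Zᵀ − Γ Diag(A_j) Γᵀ‖_F²`
`= ⟨Π Πᵀ, (Zᵀ Z)^{⊙2}⟩ − 2 ⟨A Πᵀ, (Γᵀ Z)^{⊙2}⟩ + ⟨A Aᵀ, (Γᵀ Γ)^{⊙2}⟩`,
where `‖M‖_F² = ∑ a b, (M a b)²`, `⟨X, Y⟩ = trace (Xᵀ Y)` and `X^{⊙2}` is the entrywise
square of `X`. -/
theorem penalty_expansion (d m k q : ℕ) (Z : Matrix (Fin d) (Fin m) ℝ)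
    (P : Matrix (Fin m) (Fin k) ℝ) (Γ : Matrix (Fin d) (Fin q) ℝ)
    (A : Matrix (Fin q) (Fin k) ℝ) :
    ∑ j : Fin k, ∑ a : Fin d, ∑ b : Fin d,
        ((Z * Matrix.diagonal (fun i => P i j) * Zᵀ
          - Γ * Matrix.diagonal (fun l => A l j) * Γᵀ) a b) ^ 2
    = Matrix.trace ((P * Pᵀ)ᵀ * Matrix.of fun a b => ((Zᵀ * Z) a b) ^ 2)
      - 2 * Matrix.trace ((A * Pᵀ)ᵀ * Matrix.of fun a b => ((Γᵀ * Z) a b) ^ 2)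
      + Matrix.trace ((A * Aᵀ)ᵀ * Matrix.of fun a b => ((Γᵀ * Γ) a b) ^ 2) := by
  rw [← sum_sandwich_mul_sandwich, ← sum_sandwich_mul_sandwich, ← sum_sandwich_mul_sandwich]
  simp only [Finset.mul_sum, ← Finset.sum_sub_distrib, ← Finset.sum_add_distrib]
  refine Finset.sum_congr rfl fun j _ => Finset.sum_congr rfl fun a _ =>
    Finset.sum_congr rfl fun b _ => ?_
  rw [Matrix.sub_apply]
  ring
end

section
/- Let Z ∈ ℝ^{d×m}, Π ∈ ℝ^{m×k}, and Γ ∈ ℝ^{d×q} be fixed, and define f(A) = (1/2)·Σ_{j=1}^{k} ‖Z·Diag(Π_j)·Zᵀ − Γ·Diag(A_j)·Γᵀ‖_F² for A ∈ ℝ^{q×k}. Then f is differentiable at every A, and its Fréchet derivative at A applied to a direction ΔA ∈ ℝ^{q×k} equals ⟨(Γᵀ·Γ)^{⊙2}·A − (Γᵀ·Z)^{⊙2}·Π, ΔA⟩; that is, the gradient of f with respect to A is (Γᵀ·Γ)^{⊙2}·A − (Γᵀ·Z)^{⊙2}·Π. -/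
/-!
The map `B ↦ Γ Diag(B_j) Γᵀ` is linear in `B`, so `f` is half a sum of squares of affine functions,
and the chain rule gives the derivative `-∑_j ⟨R_j, Γ Diag(ΔA_j) Γᵀ⟩`, where
`R_j = Z Diag(Π_j) Zᵀ - Γ Diag(A_j) Γᵀ` is the residual. The coefficient of `ΔA l j` is therefore
`-(Γᵀ R_j Γ) l l`, and `sum_quadratic_form` evaluates the diagonal entries of
`Γᵀ X Diag(v) Xᵀ Γ` as `(Γᵀ X)^{⊙2} v`, for `X = Z` and for `X = Γ`.
-/

open Matrix BigOperators

attribute [local instance] Matrix.frobeniusNormedAddCommGroup Matrix.frobeniusNormedSpace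

/-- The linear functional `B ↦ (Γ Diag(B_j) Γᵀ) a b`. -/
noncomputable def modelEntry {d k q : ℕ} (Γ : Matrix (Fin d) (Fin q) ℝ)
    (j : Fin k) (a b : Fin d) : Matrix (Fin q) (Fin k) ℝ →ₗ[ℝ] ℝ where
  toFun B := (Γ * Matrix.diagonal (fun l => B l j) * Γᵀ) a b
  map_add' B C := by
    simp only [Matrix.mul_apply (N := Γᵀ), Matrix.mul_diagonal, Matrix.add_apply, mul_add, add_mul,
      Finset.sum_add_distrib]
  map_smul' c B := by
    simp only [Matrix.mul_apply (N := Γᵀ), Matrix.mul_diagonal, Matrix.smul_apply, smul_eq_mul,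
      Finset.mul_sum, RingHom.id_apply]
    exact Finset.sum_congr rfl fun _ _ => by ring

/-- The quadratic form of `X Diag(v) Xᵀ` at the vector `g` is `∑_i (gᵀ X)_i² v_i`. -/
lemma sum_quadratic_form {d n : ℕ} (X : Matrix (Fin d) (Fin n) ℝ) (v : Fin n → ℝ)
    (g : Fin d → ℝ) :
    ∑ a, ∑ b, (X * Matrix.diagonal v * Xᵀ) a b * (g a * g b)
      = ∑ i, (∑ a, g a * X a i) ^ 2 * v i := by
  simp only [Matrix.mul_apply (N := Xᵀ), Matrix.mul_diagonal, Matrix.transpose_apply, sq,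
    Finset.sum_mul_sum]
  simp only [Finset.sum_mul]
  conv_rhs => rw [Finset.sum_comm]
  refine Finset.sum_congr rfl fun a _ => ?_
  rw [Finset.sum_comm]
  exact Finset.sum_congr rfl fun i _ => Finset.sum_congr rfl fun b _ => by ring

/-- Derivative of half a sum of squares of affine functionals on a normed space. Working on an
abstract space keeps the pointwise evaluation of sums of functionals independent of the choice of
norm on matrices. -/
lemma exists_hasFDerivAt_half_sum_sq {E ι κ : Type*} [NormedAddCommGroup E] [NormedSpace ℝ E]
    [Fintype ι] [Fintype κ] (c : ι → κ → κ → ℝ) (T : ι → κ → κ → E →L[ℝ] ℝ) (x : E) :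
    ∃ L : E →L[ℝ] ℝ,
      HasFDerivAt (fun y => (1 / 2) * ∑ j, ∑ a, ∑ b, (c j a b - T j a b y) ^ 2) L x ∧
      ∀ v, L v = -∑ j, ∑ a, ∑ b, (c j a b - T j a b x) * T j a b v := by
  refine ⟨_, (HasFDerivAt.fun_sum fun j _ => HasFDerivAt.fun_sum fun a _ =>
    HasFDerivAt.fun_sum fun b _ =>
      (((T j a b).hasFDerivAt (x := x)).const_sub (c j a b)).pow 2).const_mul (1 / 2),
    fun v => ?_⟩
  simp [Finset.mul_sum, ← mul_assoc]

/-- Pairing any `d × d` matrix `R` with `Γ Diag(B_j) Γᵀ` in the Frobenius inner product reads off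
the diagonal of `Γᵀ R Γ`. -/
lemma sum_mul_modelEntry {d k q : ℕ} (Γ : Matrix (Fin d) (Fin q) ℝ) (j : Fin k)
    (R : Matrix (Fin d) (Fin d) ℝ) (B : Matrix (Fin q) (Fin k) ℝ) :
    ∑ a, ∑ b, R a b * modelEntry Γ j a b B
      = ∑ l, (∑ a, ∑ b, R a b * (Γ a l * Γ b l)) * B l j := by
  simp only [modelEntry, LinearMap.coe_mk, AddHom.coe_mk, Matrix.mul_apply (N := Γᵀ),
    Matrix.mul_diagonal, Matrix.transpose_apply, Finset.mul_sum, Finset.sum_mul]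
  conv_rhs => rw [Finset.sum_comm]
  refine Finset.sum_congr rfl fun a _ => ?_
  rw [Finset.sum_comm]
  exact Finset.sum_congr rfl fun l _ => Finset.sum_congr rfl fun b _ => by ring

/-- For fixed `Z, Π, Γ`, the function
`f(A) = ½ ∑_j ‖Z Diag(Π_j) Zᵀ − Γ Diag(A_j) Γᵀ‖_F²` is (Fréchet) differentiable at every `A`,
and its derivative applied to a direction `ΔA` equals
`⟨(Γᵀ Γ)^{⊙2} A − (Γᵀ Z)^{⊙2} Π, ΔA⟩`; i.e., the gradient of `f` with respect to `A` is
`(Γᵀ Γ)^{⊙2} A − (Γᵀ Z)^{⊙2} Π`.  Here `‖M‖_F² = ∑ a b, (M a b)²`,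
`⟨X, Y⟩ = trace (Xᵀ Y)` and `X^{⊙2}` is the entrywise square of `X`. -/
theorem gradient_wrt_A (d m k q : ℕ) (Z : Matrix (Fin d) (Fin m) ℝ)
    (P : Matrix (Fin m) (Fin k) ℝ) (Γ : Matrix (Fin d) (Fin q) ℝ)
    (A : Matrix (Fin q) (Fin k) ℝ) :
    ∃ L : Matrix (Fin q) (Fin k) ℝ →L[ℝ] ℝ,
      HasFDerivAt (fun B : Matrix (Fin q) (Fin k) ℝ =>
        (1 / 2) * ∑ j : Fin k, ∑ a : Fin d, ∑ b : Fin d,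
          ((Z * Matrix.diagonal (fun i => P i j) * Zᵀ
            - Γ * Matrix.diagonal (fun l => B l j) * Γᵀ) a b) ^ 2) L A ∧
      ∀ ΔA : Matrix (Fin q) (Fin k) ℝ,
        L ΔA = Matrix.trace
          (((Matrix.of fun a b => ((Γᵀ * Γ) a b) ^ 2) * A
            - (Matrix.of fun a b => ((Γᵀ * Z) a b) ^ 2) * P)ᵀ * ΔA) := by
  let R : Fin k → Matrix (Fin d) (Fin d) ℝ := fun j =>
    Z * Matrix.diagonal (fun i => P i j) * Zᵀ - Γ * Matrix.diagonal (fun l => A l j) * Γᵀ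
  obtain ⟨L, hL, hLv⟩ := exists_hasFDerivAt_half_sum_sq
    (fun j => (Z * Matrix.diagonal (fun i => P i j) * Zᵀ : Matrix (Fin d) (Fin d) ℝ))
    (fun j a b => LinearMap.toContinuousLinearMap (modelEntry Γ j a b)) A
  refine ⟨L, hL, fun ΔA => (hLv ΔA).trans ?_⟩
  have diag_entry (j : Fin k) (l : Fin q) :
      ∑ a, ∑ b, R j a b * (Γ a l * Γ b l)
        = ∑ i, ((Γᵀ * Z) l i) ^ 2 * P i j - ∑ i, ((Γᵀ * Γ) l i) ^ 2 * A i j := by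
    simp only [R, Matrix.sub_apply, sub_mul, Finset.sum_sub_distrib]
    rw [sum_quadratic_form Z _ (fun a => Γ a l), sum_quadratic_form Γ _ (fun a => Γ a l)]
    simp [Matrix.mul_apply]
  change -∑ j, ∑ a, ∑ b, R j a b * modelEntry Γ j a b ΔA = _
  simp only [sum_mul_modelEntry, diag_entry]
  rw [← Finset.sum_neg_distrib, Matrix.trace]
  refine Finset.sum_congr rfl fun j _ => ?_
  rw [Matrix.diag_apply, Matrix.mul_apply, ← Finset.sum_neg_distrib]
  refine Finset.sum_congr rfl fun l _ => ?_
  rw [Matrix.transpose_apply, Matrix.sub_apply, Matrix.mul_apply (N := A),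
    Matrix.mul_apply (N := P)]
  simp only [Matrix.of_apply]
  ring
end
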